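/- Let n ≥ 2, let q : ℝ^n_+ → ℝ satisfy the cost-function conditions, and let c ∈ ℝ^n_+. Then the profit operator Π_q is injective on L^∞_{I−c}(ℝ^n_+) (i.e., if f ∈ L^∞_{I−c}(ℝ^n_+) and (Π_q f)(p_0,p) = 0 for all p_0 > 0 and all p ∈ ℝ^n_+, then f = 0 a.e.) if and only if (M e^{−q})(c + iξ) ≠ 0 for every ξ ∈ ℝ^n. -/

import Mathlib

open MeasureTheory Complex Set

noncomputable section

/-- The positive orthant `ℝ^n_+`. -/
def posOrth (n : ℕ) : Set (Fin n → ℝ) := {x | ∀ i, 0 < x i}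

/-- `q` satisfies the cost-function conditions: `C¹` on `ℝ^n_+`, positive,
positively homogeneous of degree one, with bounded level sets. -/
def IsCostFun (n : ℕ) (q : (Fin n → ℝ) → ℝ) : Prop :=
  ContDiffOn ℝ 1 q (posOrth n) ∧
  (∀ x ∈ posOrth n, 0 < q x) ∧
  (∀ lam : ℝ, 0 < lam → ∀ x ∈ posOrth n, q (fun i => lam * x i) = lam * q x) ∧
  (∀ t : ℝ, Bornology.IsBounded {x | x ∈ posOrth n ∧ q x = t})

/-- The `n`-dimensional Mellin transform `(Mg)(z) = ∫_{ℝ^n_+} x^{z-I} g(x) dx`. -/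
def mellinT (n : ℕ) (g : (Fin n → ℝ) → ℝ) (z : Fin n → ℂ) : ℂ :=
  ∫ x in posOrth n, (∏ i, (x i : ℂ) ^ (z i - 1)) * g x

/-- Membership in `L^∞_c(ℝ^n_+)`: measurable with `ess sup |f(x) x^c| < ∞`. -/
def MemLinfw (n : ℕ) (c : Fin n → ℝ) (f : (Fin n → ℝ) → ℝ) : Prop :=
  AEStronglyMeasurable f (volume.restrict (posOrth n)) ∧
  ∃ K : ℝ, ∀ᵐ x ∂(volume.restrict (posOrth n)), |f x * ∏ i, x i ^ c i| ≤ K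

/-- The profit operator `(Π_q f)(p₀, p)`. -/
def Piq (n : ℕ) (q : (Fin n → ℝ) → ℝ) (f : (Fin n → ℝ) → ℝ)
    (p0 : ℝ) (p : Fin n → ℝ) : ℝ :=
  ∫ x in posOrth n, max 0 (p0 - q (fun i => p i * x i)) * f x

open FourierTransform Filter Topology in
theorem wienerA {V : Type*} [NormedAddCommGroup V] [InnerProductSpace ℝ V] [FiniteDimensional ℝ V]
    [MeasurableSpace V] [BorelSpace V] (K g : V → ℂ)
    (hK : ∀ k : ℕ, Integrable (fun v ↦ ‖v‖ ^ k * ‖K v‖)) (hKi : Integrable K)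
    (hK0 : ∀ ξ, 𝓕⁻ K ξ ≠ 0) (hg : Measurable g) (B : ℝ) (hB : ∀ u, ‖g u‖ ≤ B)
    (h : ∀ w, ∫ u, K (u - w) * g u = 0) (Ψ : V → ℂ) (hΨ : ContDiff ℝ (⊤ : ℕ∞) Ψ)
    (hΨc : HasCompactSupport Ψ) : ∫ u, g u * 𝓕 Ψ u = 0 := by
  have hm : ContDiff ℝ (⊤ : ℕ∞) (𝓕⁻ K) := by
    have h1 : ContDiff ℝ (⊤ : ℕ∞) (𝓕 K) := Real.contDiff_fourier (fun n _ => hK n)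
    have h2 : 𝓕⁻ K = fun v => 𝓕 K (-v) := by
      ext v; rw [Real.fourierInv_eq_fourier_neg]
    rw [h2]; exact h1.comp contDiff_neg
  set Φ : V → ℂ := fun ξ => Ψ ξ * (𝓕⁻ K ξ)⁻¹ with hΦ
  have hΦs : ContDiff ℝ (⊤ : ℕ∞) Φ := hΨ.mul (hm.inv hK0)
  have hΦc : HasCompactSupport Φ := hΨc.mul_right
  set S := hΦc.toSchwartzMap hΦs
  have hS : (S : V → ℂ) = Φ := rfl
  have hFint : Integrable (𝓕 Φ) := by
    have : (𝓕 S : SchwartzMap V ℂ).toFun = 𝓕 Φ := by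
      exact SchwartzMap.fourier_coe S
    rw [← this]; exact (𝓕 S : SchwartzMap V ℂ).integrable
  have hΦi : Integrable Φ := S.integrable
  have key : ∀ u, 𝓕 Ψ u = ∫ w, K (u - w) * 𝓕 Φ w := by
    intro u
    have h1 : ∀ ξ, 𝓕 (fun w => K (u - w)) ξ * Φ ξ = Real.fourierChar (-inner ℝ ξ u) • Ψ ξ := by
      intro ξ
      have h2 : 𝓕 (fun w => K (u - w)) ξ = Real.fourierChar (-inner ℝ ξ u) • 𝓕⁻ K ξ := by
        rw [Real.fourier_eq, Real.fourierInv_eq, Circle.smul_def, ← integral_smul]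
        rw [← integral_sub_left_eq_self _ volume u]
        congr 1; ext v
        rw [← Circle.smul_def, smul_smul, ← AddChar.map_add_eq_mul]
        congr 2
        ·
          rw [inner_sub_left, real_inner_comm u ξ]; ring
        · abel
      rw [h2, hΦ]; simp only [smul_mul_assoc]
      congr 1
      field_simp [hK0 ξ]
    rw [Real.fourier_eq]
    simp_rw [← h1]
    have := VectorFourier.integral_fourierIntegral_smul_eq_flip (L := innerₗ V) (μ := volume) (ν := volume)
      Real.continuous_fourierChar continuous_inner (hKi.comp_sub_left u) hΦi
    simpa using! this
  simp_rw [key, ← integral_const_mul]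
  rw [integral_integral_swap]
  · have : ∀ w, ∫ u, g u * (K (u - w) * 𝓕 Φ w) = 0 := by
      intro w
      have e : ∀ u, g u * (K (u - w) * 𝓕 Φ w) = (K (u - w) * g u) * 𝓕 Φ w := fun u => by ring
      simp_rw [e]
      rw [integral_mul_const, h w, zero_mul]
    simp [this]
  · have h3 : Integrable (fun p : V × V => K (p.1 - p.2) * 𝓕 Φ p.2) (volume.prod volume) := by
      have := Integrable.convolution_integrand (ContinuousLinearMap.mul ℂ ℂ) hFint hKi (μ := volume) (ν := volume)
      refine this.congr (ae_of_all _ fun p => ?_)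
      simp [mul_comm]
    have := h3.bdd_mul (f := fun p : V × V => g p.1) (c := B) (Measurable.aestronglyMeasurable (by fun_prop)) (ae_of_all _ fun p => hB _)
    exact this

open FourierTransform Filter Topology in
theorem wienerB {V : Type*} [NormedAddCommGroup V] [InnerProductSpace ℝ V] [FiniteDimensional ℝ V]
    [MeasurableSpace V] [BorelSpace V] (K g : V → ℂ)
    (hK : ∀ k : ℕ, Integrable (fun v ↦ ‖v‖ ^ k * ‖K v‖)) (hKi : Integrable K)
    (hK0 : ∀ ξ, 𝓕⁻ K ξ ≠ 0) (hg : Continuous g) (B : ℝ) (hB : ∀ u, ‖g u‖ ≤ B)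
    (h : ∀ w, ∫ u, K (u - w) * g u = 0) : g 0 = 0 := by
  obtain ⟨χ0⟩ : Nonempty (ContDiffBump (0 : V)) := inferInstance
  set χ : V → ℂ := fun x => ((χ0 x : ℝ) : ℂ) with hχ
  have hχs : ContDiff ℝ (⊤ : ℕ∞) χ := Complex.ofRealCLM.contDiff.comp χ0.contDiff
  have hχc : HasCompactSupport χ := χ0.hasCompactSupport.comp_left (g := fun r : ℝ => (r : ℂ)) (by simp)
  have hχ0 : χ 0 = 1 := by
    simp only [hχ]
    rw [χ0.one_of_mem_closedBall (by simp [χ0.rIn_pos.le])]; simp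
  set S := hχc.toSchwartzMap hχs
  have hF : (𝓕 S : SchwartzMap V ℂ).toFun = 𝓕 χ := SchwartzMap.fourier_coe S
  have hFint : Integrable (𝓕 χ) := by
    rw [← hF]; exact (𝓕 S : SchwartzMap V ℂ).integrable
  have hone : ∫ v, 𝓕 χ v = 1 := by
    have h1 : 𝓕⁻ (𝓕 χ) 0 = χ 0 := by
      have : 𝓕⁻ (𝓕 S) = S := by simp
      have h2 := congrArg (fun s : SchwartzMap V ℂ => s 0) this
      simp only [SchwartzMap.fourierInv_coe, SchwartzMap.fourier_coe] at h2
      exact h2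
    rw [← hχ0, ← h1, Real.fourierInv_eq]
    simp
  have hz : ∀ N : ℕ, ∫ v, g (((N : ℝ) + 1)⁻¹ • v) * 𝓕 χ v = 0 := by
    intro N
    set R : ℝ := (N : ℝ) + 1 with hR
    have hRp : 0 < R := by positivity
    have h1 := wienerA K g hK hKi hK0 hg.measurable B hB h (fun ξ => χ (R⁻¹ • ξ))
      (hχs.comp (contDiff_const_smul R⁻¹))
      (hχc.comp_homeomorph (Homeomorph.smulOfNeZero R⁻¹ (inv_ne_zero hRp.ne')))
    have h2 : ∀ u, 𝓕 (fun ξ => χ (R⁻¹ • ξ)) u = (R ^ Module.finrank ℝ V) • 𝓕 χ (R • u) := by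
      intro u
      rw [Real.fourier_eq, Real.fourier_eq]
      have := Measure.integral_comp_smul (volume : Measure V)
        (fun v => Real.fourierChar (-inner ℝ v (R • u)) • χ v) R⁻¹
      simp only [inv_pow, inv_inv, abs_of_pos (pow_pos hRp _)] at this
      rw [← this]
      congr 1; ext v
      congr 3
      rw [inner_smul_left, inner_smul_right]
      simp; field_simp
    simp_rw [h2] at h1
    have h3 := Measure.integral_comp_smul (volume : Measure V)
        (fun v => g (R⁻¹ • v) * 𝓕 χ v) R
    simp only [smul_smul, inv_mul_cancel₀ hRp.ne', one_smul] at h3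
    have h4 : ∫ u, g u * 𝓕 χ (R • u) = 0 := by
      have e : ∀ u, g u * (R ^ Module.finrank ℝ V) • 𝓕 χ (R • u) =
        (R ^ Module.finrank ℝ V) • (g u * 𝓕 χ (R • u)) := fun u => by
          rw [mul_smul_comm]
      simp_rw [e] at h1
      rw [integral_smul, smul_eq_zero] at h1
      exact h1.resolve_left (by positivity)
    rw [h4] at h3
    exact (smul_eq_zero.1 h3.symm).resolve_left (by positivity)
  have hlim : Tendsto (fun N : ℕ => ∫ v, g (((N : ℝ) + 1)⁻¹ • v) * 𝓕 χ v) atTop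
      (𝓝 (∫ v, g 0 * 𝓕 χ v)) := by
    apply tendsto_integral_of_dominated_convergence (fun v => B * ‖𝓕 χ v‖)
    · intro N
      exact (by fun_prop : Continuous fun v => g (((N : ℝ) + 1)⁻¹ • v)).aestronglyMeasurable.mul hFint.1
    · exact hFint.norm.const_mul B
    · intro N
      refine ae_of_all _ fun v => ?_
      rw [norm_mul]; gcongr; exact hB _
    · refine ae_of_all _ fun v => ?_
      refine Tendsto.mul_const _ ?_
      have h5 : Tendsto (fun N : ℕ => ((N : ℝ) + 1)⁻¹ • v) atTop (𝓝 ((0:ℝ) • v)) := by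
        refine Tendsto.smul_const ?_ v
        simpa using tendsto_one_div_add_atTop_nhds_zero_nat (𝕜 := ℝ)
      rw [zero_smul] at h5
      exact (hg.tendsto 0).comp h5
  simp_rw [hz] at hlim
  have := tendsto_nhds_unique hlim tendsto_const_nhds
  rw [integral_const_mul, hone, mul_one] at this
  exact this

open FourierTransform Filter Topology in
theorem wienerC {V : Type*} [NormedAddCommGroup V] [InnerProductSpace ℝ V] [FiniteDimensional ℝ V]
    [MeasurableSpace V] [BorelSpace V] (K g : V → ℂ)
    (hK : ∀ k : ℕ, Integrable (fun v ↦ ‖v‖ ^ k * ‖K v‖)) (hKi : Integrable K)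
    (hK0 : ∀ ξ, 𝓕⁻ K ξ ≠ 0) (hg : Measurable g) (B : ℝ) (hB : ∀ u, ‖g u‖ ≤ B)
    (h : ∀ w, ∫ u, K (u - w) * g u = 0) : ∀ᵐ u, g u = 0 := by
  have hgl : LocallyIntegrable g := by
    intro x
    refine ⟨Metric.ball x 1, Metric.ball_mem_nhds _ one_pos, ?_⟩
    exact Measure.integrableOn_of_bounded (M := B) measure_ball_lt_top.ne hg.aestronglyMeasurable (ae_of_all _ hB)
  refine ae_eq_zero_of_integral_contDiff_smul_eq_zero hgl fun φ hφ hφc => ?_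
  have hφi : Integrable φ := hφ.continuous.integrable_of_hasCompactSupport hφc
  set G : V → ℂ := fun u => ∫ s, φ s • g (u + s) with hG
  have hGc : Continuous G := by
    have h1 : HasCompactSupport (fun s => φ (-s)) := hφc.comp_homeomorph (Homeomorph.neg V)
    have h2 := h1.continuous_convolution_right (ContinuousLinearMap.lsmul ℝ ℝ).flip hgl
      (hφ.continuous.comp continuous_neg) (μ := volume)
    have h3 : G = convolution g (fun s => φ (-s)) (ContinuousLinearMap.lsmul ℝ ℝ).flip volume := by
      ext u
      simp only [hG, convolution]
      rw [← integral_sub_right_eq_self _ u]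
      congr 1; ext s
      simp
    rw [h3]; exact h2
  have hGb : ∀ u, ‖G u‖ ≤ ∫ s, ‖φ s‖ * B := by
    intro u
    refine norm_integral_le_of_norm_le (hφi.norm.mul_const B) (ae_of_all _ fun s => ?_)
    rw [norm_smul]; gcongr; exact hB _
  have h0 : ∀ w, ∫ u, K (u - w) * G u = 0 := by
    intro w
    simp only [hG, ← integral_const_mul]
    rw [integral_integral_swap]
    · have : ∀ s, ∫ u, K (u - w) * φ s • g (u + s) = 0 := by
        intro s
        have e : ∀ u, K (u - w) * φ s • g (u + s) = φ s • (K ((u + s) - (w + s)) * g (u + s)) := by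
          intro u
          rw [mul_smul_comm]; congr 3; abel
        simp_rw [e]
        rw [integral_smul, integral_add_right_eq_self (fun u => K (u - (w+s)) * g u), h, smul_zero]
      simp only [this, integral_zero]
    · have h3 : Integrable (fun p : V × V => K (p.1 - w) * (φ p.2 : ℂ)) (volume.prod volume) :=
        (hKi.comp_sub_right w).mul_prod hφi.ofReal
      have := h3.bdd_mul (f := fun p : V × V => g (p.1 + p.2)) (c := B) (Measurable.aestronglyMeasurable (by fun_prop)) (ae_of_all _ fun p => hB _)
      refine this.congr (ae_of_all _ fun p => ?_)
      simp [Function.uncurry]; ring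
  have := wienerB K G hK hKi hK0 hGc _ hGb h0
  simpa [hG] using this
/-- componentwise exponential -/
def exV {n : ℕ} (u : EuclideanSpace ℝ (Fin n)) : Fin n → ℝ := fun i => Real.exp (u i)

theorem posOrth_isOpen (n : ℕ) : IsOpen (posOrth n) := by
  have : posOrth n = ⋂ i, {x : Fin n → ℝ | 0 < x i} := by
    ext x; simp [posOrth]
  rw [this]
  exact isOpen_iInter_of_finite fun i => isOpen_lt continuous_const (continuous_apply i)

theorem exp_image (n : ℕ) : (fun (x : Fin n → ℝ) i => Real.exp (x i)) '' univ = posOrth n := by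
  ext x
  simp only [image_univ, mem_range, posOrth, mem_ofPred_eq]
  constructor
  · rintro ⟨y, rfl⟩ i; exact Real.exp_pos _
  · intro h
    exact ⟨fun i => Real.log (x i), by ext i; exact Real.exp_log (h i)⟩

theorem cov_int (n : ℕ) {F : Type*} [NormedAddCommGroup F] [NormedSpace ℝ F] (f : (Fin n → ℝ) → F) :
    ∫ x in posOrth n, f x
      = ∫ u : EuclideanSpace ℝ (Fin n), Real.exp (∑ i, u i) • f (exV u) := by
  have h1 := integral_image_eq_integral_abs_det_fderiv_smul (volume : Measure (Fin n → ℝ))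
    (s := univ) (f := fun (x : Fin n → ℝ) i => Real.exp (x i))
    (f' := fun x => ContinuousLinearMap.pi fun i => Real.exp (x i) • ContinuousLinearMap.proj (R := ℝ) (φ := fun _ : Fin n => ℝ) i)
    MeasurableSet.univ ?_ ?_ f
  · rw [exp_image] at h1
    rw [h1, setIntegral_univ, ← (PiLp.volume_preserving_toLp (Fin n)).integral_comp
      (MeasurableEquiv.toLp 2 _).measurableEmbedding]
    congr 1; ext x
    congr 1
    have : (ContinuousLinearMap.pi fun i => Real.exp (x i) • ContinuousLinearMap.proj (R := ℝ) (φ := fun _ : Fin n => ℝ) i).det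
        = ∏ i, Real.exp (x i) := by
      rw [ContinuousLinearMap.det, ← Matrix.det_diagonal, ← LinearMap.det_toLin']
      congr 1
      apply LinearMap.ext
      intro v
      ext i
      simp [Matrix.mulVec_diagonal]
    rw [this, Real.exp_sum, abs_of_pos (Finset.prod_pos fun i _ => Real.exp_pos _)]
  · intro x _
    apply HasFDerivAt.hasFDerivWithinAt
    rw [hasFDerivAt_pi]
    intro i
    exact (ContinuousLinearMap.proj (R := ℝ) (φ := fun _ : Fin n => ℝ) i).hasFDerivAt.exp
  · intro x _ y _ h
    ext i
    exact Real.exp_injective (congrFun h i)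

theorem ae_of_ae_exV {n : ℕ} {P : (Fin n → ℝ) → Prop}
    (h : ∀ᵐ u : EuclideanSpace ℝ (Fin n), P (exV u)) :
    ∀ᵐ x ∂(volume.restrict (posOrth n)), P x := by
  rw [ae_restrict_iff' (posOrth_isOpen n).measurableSet]
  have h1 : ∀ᵐ x : Fin n → ℝ, P (fun i => Real.exp (x i)) :=
    (PiLp.volume_preserving_toLp (Fin n)).quasiMeasurePreserving.ae h
  rw [ae_iff] at h1 ⊢
  refine measure_mono_null ?_ (addHaar_image_eq_zero_of_differentiableOn_of_addHaar_eq_zero volume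
    (f := fun (x : Fin n → ℝ) i => Real.exp (x i)) ?_ h1)
  · intro x hx
    simp only [mem_ofPred_eq, Classical.not_imp] at hx
    refine ⟨fun i => Real.log (x i), ?_, ?_⟩
    · have : (fun i => Real.exp (Real.log (x i))) = x := by
        ext i; exact Real.exp_log (hx.1 i)
      simp only [mem_ofPred_eq, this]; exact hx.2
    · ext i; exact Real.exp_log (hx.1 i)
  · exact (by fun_prop : Differentiable ℝ fun (x : Fin n → ℝ) i => Real.exp (x i)).differentiableOn

theorem exV_meas {n : ℕ} : Measurable (exV : EuclideanSpace ℝ (Fin n) → _) := by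
  unfold exV; fun_prop

theorem exV_qmp (n : ℕ) : Measure.QuasiMeasurePreserving (exV : EuclideanSpace ℝ (Fin n) → _)
    volume (volume.restrict (posOrth n)) := by
  refine ⟨exV_meas, ?_⟩
  have h1 : Measure.QuasiMeasurePreserving (fun (x : Fin n → ℝ) i => Real.exp (x i))
      volume (volume.restrict (posOrth n)) := by
    refine ⟨by fun_prop, ?_⟩
    refine Measure.AbsolutelyContinuous.mk fun s hs h0 => ?_
    rw [Measure.map_apply (by fun_prop) hs]
    rw [Measure.restrict_apply hs] at h0
    refine measure_mono_null ?_ (addHaar_image_eq_zero_of_differentiableOn_of_addHaar_eq_zero volume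
      (f := fun (x : Fin n → ℝ) i => Real.log (x i)) ?_ h0)
    · intro x hx
      exact ⟨fun i => Real.exp (x i), ⟨hx, fun i => Real.exp_pos _⟩, by ext i; simp⟩
    · intro x hx
      have hx2 : ∀ i, x i ≠ 0 := fun i => (hx.2 i).ne'
      apply DifferentiableAt.differentiableWithinAt
      rw [differentiableAt_pi]
      intro i
      exact (differentiableAt_apply i x).log (hx2 i)
  have h2 := h1.comp (PiLp.volume_preserving_ofLp (Fin n)).quasiMeasurePreserving
  exact h2.2

theorem cost_Q {n : ℕ} {q : (Fin n → ℝ) → ℝ} (hq : IsCostFun n q) :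
    (Continuous fun u : EuclideanSpace ℝ (Fin n) => q (exV u)) ∧
    (∀ u : EuclideanSpace ℝ (Fin n), 0 < q (exV u)) ∧
    (∃ L : ℝ, 0 ≤ L ∧ ∀ u : EuclideanSpace ℝ (Fin n), q (exV u) < 1 → ∀ i, u i ≤ L) := by
  obtain ⟨h1, h2, h3, h4⟩ := hq
  have hp : ∀ u : EuclideanSpace ℝ (Fin n), exV u ∈ posOrth n := fun u i => Real.exp_pos _
  refine ⟨?_, fun u => h2 _ (hp u), ?_⟩
  · exact h1.continuousOn.comp_continuous (by unfold exV; fun_prop) hp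
  · obtain ⟨R, hR⟩ := (h4 1).exists_norm_le
    refine ⟨Real.log (max R 1), Real.log_nonneg (le_max_right _ _), fun u hu i => ?_⟩
    have hs := h2 _ (hp u)
    have h5 := h3 (q (exV u))⁻¹ (inv_pos.2 hs) _ (hp u)
    rw [inv_mul_cancel₀ hs.ne'] at h5
    have h6 := hR _ ⟨fun i => mul_pos (inv_pos.2 hs) (hp u i), h5⟩
    have h7 := (norm_le_pi_norm (fun i => (q (exV u))⁻¹ * exV u i) i).trans h6
    rw [Real.norm_of_nonneg (mul_pos (inv_pos.2 hs) (hp u i)).le] at h7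
    rw [Real.le_log_iff_exp_le (by positivity)]
    have h8 : exV u i ≤ (q (exV u))⁻¹ * exV u i := by
      have : 1 ≤ (q (exV u))⁻¹ := (one_le_inv₀ hs).2 hu.le
      nlinarith [hp u i]
    exact (h8.trans h7).trans (le_max_left _ _)

/-- the kernel in logarithmic coordinates -/
def Kq {n : ℕ} (q : (Fin n → ℝ) → ℝ) (c : Fin n → ℝ) (u : EuclideanSpace ℝ (Fin n)) : ℝ :=
  Real.exp (∑ i, c i * u i) * max 0 (1 - q (exV u))

theorem Kq_cont {n : ℕ} {q : (Fin n → ℝ) → ℝ} (hq : IsCostFun n q) (c : Fin n → ℝ) :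
    Continuous (Kq q c) := by
  have := (cost_Q hq).1
  unfold Kq
  exact (by fun_prop : Continuous fun u : EuclideanSpace ℝ (Fin n) => Real.exp (∑ i, c i * u i)).mul
    (continuous_const.max (continuous_const.sub this))

theorem Kq_bound {n : ℕ} {q : (Fin n → ℝ) → ℝ} (hq : IsCostFun n q) (c : Fin n → ℝ)
    (hc : ∀ i, 0 < c i) : ∃ C ε : ℝ, 0 < ε ∧ 0 < C ∧ ∀ u, |Kq q c u| ≤ C * Real.exp (-(ε * ‖u‖)) := by
  obtain ⟨-, hpos, L, hL, hQ⟩ := cost_Q hq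
  obtain ⟨ε, hε, hεc⟩ : ∃ ε > 0, ∀ i, ε ≤ c i := by
    have : ∀ i ∈ (Finset.univ : Finset (Fin n)), ∀ᶠ ε in nhdsWithin (0:ℝ) (Ioi 0), ε ≤ c i := by
      intro i _
      exact (Filter.Eventually.filter_mono nhdsWithin_le_nhds (eventually_le_nhds (hc i)))
    have h2 := ((Filter.eventually_all_finset _).2 this).and self_mem_nhdsWithin
    obtain ⟨ε, h3, h4⟩ := h2.exists
    exact ⟨ε, h4, fun i => h3 i (Finset.mem_univ i)⟩
  refine ⟨Real.exp (2 * L * ∑ i, c i), ε, hε, Real.exp_pos _, fun u => ?_⟩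
  unfold Kq
  rw [abs_of_nonneg (by positivity)]
  by_cases h : q (exV u) < 1
  · have h1 := hQ u h
    have h2 : max 0 (1 - q (exV u)) ≤ 1 := max_le zero_le_one (by linarith [hpos u])
    have hn : ‖u‖ ≤ ∑ i, |u i| := by
      rw [EuclideanSpace.norm_eq]
      apply Real.sqrt_le_iff.2
      refine ⟨Finset.sum_nonneg fun i _ => abs_nonneg _, ?_⟩
      simp only [Real.norm_eq_abs]
      exact Finset.sum_sq_le_sq_sum_of_nonneg (fun i _ => abs_nonneg _)
    have h3 : ∑ i, c i * u i ≤ 2 * L * ∑ i, c i + -(ε * ‖u‖) := by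
      have h4 : ∑ i, c i * u i ≤ ∑ i, (2 * L * c i - ε * |u i|) := by
        refine Finset.sum_le_sum fun i _ => ?_
        have ha := hεc i
        have hb := h1 i
        have hci := hc i
        have h5 : ε * |u i| ≤ c i * |u i| := by gcongr
        have h6 : c i * (u i + |u i|) ≤ c i * (2 * L) := by
          apply mul_le_mul_of_nonneg_left _ hci.le
          rcases abs_cases (u i) with h | h <;> linarith
        linarith
      rw [Finset.sum_sub_distrib, ← Finset.mul_sum, ← Finset.mul_sum] at h4
      have : ε * ‖u‖ ≤ ε * ∑ i, |u i| := by gcongr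
      linarith
    rw [← Real.exp_add]
    calc _ ≤ Real.exp (∑ i, c i * u i) * 1 := by gcongr
      _ ≤ _ := by rw [mul_one]; exact Real.exp_le_exp.2 h3
  · rw [max_eq_left (by linarith)]
    simp only [mul_zero]; positivity

theorem exp_poly_integrable {V : Type*} [NormedAddCommGroup V] [InnerProductSpace ℝ V] [FiniteDimensional ℝ V]
    [MeasurableSpace V] [BorelSpace V] (ε : ℝ) (hε : 0 < ε) (k : ℕ) :
    Integrable (fun v : V => ‖v‖ ^ k * Real.exp (-(ε * ‖v‖))) := by
  set r : ℕ := Module.finrank ℝ V + 1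
  have h0 : Integrable (fun v : V => (1 + ‖v‖) ^ (-(r:ℝ))) :=
    integrable_one_add_norm (by simp [r])
  -- (1+t)^(k+r) exp(-ε t) bounded
  have hb : ∀ t : ℝ, 0 ≤ t → (1 + t) ^ (k + r) * Real.exp (-(ε * t)) ≤
      (k + r).factorial * (ε⁻¹) ^ (k + r) * Real.exp ε := by
    intro t ht
    have h1 := Real.pow_div_factorial_le_exp (ε * (1 + t)) (by positivity) (k + r)
    rw [div_le_iff₀ (by positivity), mul_pow] at h1
    have h2 : Real.exp (ε * (1+t)) = Real.exp ε * Real.exp (ε * t) := by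
      rw [← Real.exp_add]; ring_nf
    rw [Real.exp_neg, ← div_eq_mul_inv, div_le_iff₀ (Real.exp_pos _)]
    rw [h2] at h1
    rw [inv_pow]
    have h3 : 0 < ε ^ (k + r) := by positivity
    calc (1 + t) ^ (k + r) = (ε ^ (k + r))⁻¹ * (ε ^ (k+r) * (1 + t) ^ (k + r)) := by
          field_simp
      _ ≤ (ε ^ (k + r))⁻¹ * (Real.exp ε * Real.exp (ε * t) * (k + r).factorial) := by gcongr
      _ = _ := by ring
  refine (h0.const_mul ((k + r).factorial * (ε⁻¹) ^ (k + r) * Real.exp ε)).mono'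
    (Continuous.aestronglyMeasurable (by fun_prop)) (ae_of_all _ fun v => ?_)
  rw [Real.norm_of_nonneg (by positivity)]
  have h1 := hb ‖v‖ (norm_nonneg _)
  rw [Real.rpow_neg (by positivity), Real.rpow_natCast, ← div_eq_mul_inv, le_div_iff₀ (by positivity)]
  refine le_trans ?_ h1
  rw [pow_add _ k r]
  have : ‖v‖ ^ k ≤ (1 + ‖v‖) ^ k := by gcongr; linarith
  calc ‖v‖ ^ k * Real.exp (-(ε * ‖v‖)) * (1 + ‖v‖) ^ r ≤ (1 + ‖v‖) ^ k * Real.exp (-(ε * ‖v‖)) * (1 + ‖v‖) ^ r := by gcongr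
    _ = _ := by ring

theorem Kq_moments {n : ℕ} {q : (Fin n → ℝ) → ℝ} (hq : IsCostFun n q) (c : Fin n → ℝ)
    (hc : ∀ i, 0 < c i) (k : ℕ) : Integrable fun u => ‖u‖ ^ k * |Kq q c u| := by
  obtain ⟨C, ε, hε, hC, hb⟩ := Kq_bound hq c hc
  have hcont := Kq_cont hq c
  refine ((exp_poly_integrable ε hε k).const_mul C).mono'
    (Continuous.aestronglyMeasurable (by fun_prop)) (ae_of_all _ fun v => ?_)
  rw [Real.norm_of_nonneg (by positivity)]
  calc _ ≤ ‖v‖ ^ k * (C * Real.exp (-(ε * ‖v‖))) := by gcongr; exact hb v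
    _ = _ := by ring

theorem Kq_integrable {n : ℕ} {q : (Fin n → ℝ) → ℝ} (hq : IsCostFun n q) (c : Fin n → ℝ)
    (hc : ∀ i, 0 < c i) : Integrable (Kq q c) := by
  have := Kq_moments hq c hc 0
  simp only [pow_zero, one_mul] at this
  exact (integrable_norm_iff (Kq_cont hq c).aestronglyMeasurable).1 this
theorem exp_laplace (s : ℝ) (hs : 0 < s) :
    ∫ t in Ioi (0:ℝ), max 0 (t - s) * Real.exp (-t) = Real.exp (-s) := by
  set F : ℝ → ℝ := (Ioi (0:ℝ)).indicator (fun t => Real.exp (-t) * t ^ ((2:ℝ) - 1)) with hF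
  have h1 : ∫ t, F t = 1 := by
    rw [hF, integral_indicator measurableSet_Ioi, ← Real.Gamma_eq_integral (by norm_num)]
    simp
  have h2 : ∀ t, (Ioi (0:ℝ)).indicator (fun t => max 0 (t - s) * Real.exp (-t)) t
      = Real.exp (-s) * F (t - s) := by
    intro t
    by_cases ht : s < t
    · rw [hF, indicator_of_mem (show t ∈ Ioi (0:ℝ) from hs.trans ht),
        indicator_of_mem (show t - s ∈ Ioi (0:ℝ) from sub_pos.2 ht)]
      rw [max_eq_right (sub_pos.2 ht).le, ← mul_assoc, ← Real.exp_add]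
      norm_num
      ring_nf
    · rw [hF, indicator_of_notMem (s := Ioi (0:ℝ)) (a := t - s) (by simp; linarith)]
      simp only [indicator]
      rw [max_eq_left (by linarith)]
      simp
  rw [← integral_indicator measurableSet_Ioi]
  simp_rw [h2]
  rw [integral_const_mul, integral_sub_right_eq_self F s, h1, mul_one]

/-- complex kernel -/
def Fq {n : ℕ} (q : (Fin n → ℝ) → ℝ) (z : Fin n → ℂ) (t : ℝ) (u : EuclideanSpace ℝ (Fin n)) : ℂ :=
  cexp (∑ i, z i * u i) * (max 0 (t - q (exV u)) : ℝ)

theorem Fq_norm {n : ℕ} (q : (Fin n → ℝ) → ℝ) (z : Fin n → ℂ) (u : EuclideanSpace ℝ (Fin n)) :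
    ‖Fq q z 1 u‖ = Kq q (fun i => (z i).re) u := by
  unfold Fq Kq
  rw [norm_mul, Complex.norm_exp, Complex.norm_of_nonneg (le_max_left _ _)]
  simp

theorem Fq_cont {n : ℕ} {q : (Fin n → ℝ) → ℝ} (hq : IsCostFun n q) (z : Fin n → ℂ) :
    Continuous (fun p : EuclideanSpace ℝ (Fin n) × ℝ => Fq q z p.2 p.1) := by
  have := (cost_Q hq).1
  unfold Fq
  refine Continuous.mul (by fun_prop) (Complex.continuous_ofReal.comp ?_)
  exact continuous_const.max (continuous_snd.sub (this.comp continuous_fst))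

theorem Fq_integrable {n : ℕ} {q : (Fin n → ℝ) → ℝ} (hq : IsCostFun n q) (z : Fin n → ℂ)
    (hz : ∀ i, 0 < (z i).re) : Integrable (Fq q z 1) := by
  have h := Kq_integrable hq _ hz
  refine h.mono' ((Fq_cont hq z).comp (by fun_prop : Continuous fun u => (u, (1:ℝ)))).aestronglyMeasurable
    (ae_of_all _ fun u => (Fq_norm q z u).le)

theorem Fq_scale {n : ℕ} {q : (Fin n → ℝ) → ℝ} (hq : IsCostFun n q) (z : Fin n → ℂ) (t : ℝ) (ht : 0 < t)
    (u : EuclideanSpace ℝ (Fin n)) :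
    Fq q z t u = (t : ℂ) ^ (1 + ∑ i, z i) * Fq q z 1 (u - WithLp.toLp 2 (fun _ => Real.log t)) := by
  have ht0 : (t : ℂ) ≠ 0 := by exact_mod_cast ht.ne'
  set v := u - WithLp.toLp 2 (fun _ => Real.log t) with hv
  have hvi : ∀ i, u i = v i + Real.log t := fun i => by simp [hv]
  have h1 : exV u = fun i => t * exV v i := by
    ext i
    simp only [exV]
    rw [hvi, Real.exp_add, Real.exp_log ht, mul_comm]
  have h2 : q (exV u) = t * q (exV v) := by
    rw [h1]; exact hq.2.2.1 t ht _ (fun i => Real.exp_pos _)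
  have h3 : max 0 (t - q (exV u)) = t * max 0 (1 - q (exV v)) := by
    rw [h2, mul_max_of_nonneg _ _ ht.le]; congr 1 <;> ring
  unfold Fq
  rw [h3, Complex.cpow_add _ _ ht0, Complex.cpow_one, Complex.cpow_def_of_ne_zero ht0, ← Complex.ofReal_log ht.le]
  have h4 : ∑ i, z i * (u i : ℂ) = (Real.log t : ℂ) * ∑ i, z i + ∑ i, z i * (v i : ℂ) := by
    rw [Finset.mul_sum, ← Finset.sum_add_distrib]
    refine Finset.sum_congr rfl fun i _ => ?_
    rw [hvi]; push_cast; ring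
  rw [h4, Complex.exp_add]
  push_cast; ring

theorem mellin_eq {n : ℕ} {q : (Fin n → ℝ) → ℝ} (hq : IsCostFun n q) (z : Fin n → ℂ)
    (hz : ∀ i, 0 < (z i).re) :
    mellinT n (fun x => Real.exp (-q x)) z = Complex.Gamma (2 + ∑ i, z i) * ∫ u, Fq q z 1 u := by
  have hsre : 0 ≤ ∑ i, (z i).re := Finset.sum_nonneg fun i _ => (hz i).le
  have hre : 0 < (2 + ∑ i, z i).re := by
    simp; linarith
  have hpos := (cost_Q hq).2.1
  have step1 : mellinT n (fun x => Real.exp (-q x)) z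
      = ∫ u : EuclideanSpace ℝ (Fin n), cexp (∑ i, z i * u i) * (Real.exp (-q (exV u)) : ℝ) := by
    unfold mellinT
    rw [cov_int]
    congr 1; ext u
    have h1 : ∀ i, ((exV u i : ℝ) : ℂ) ^ (z i - 1) = cexp (z i * u i - u i) := by
      intro i
      simp only [exV]
      rw [Complex.cpow_def_of_ne_zero (by simp), ← Complex.ofReal_log (Real.exp_pos _).le, Real.log_exp]
      ring_nf
    simp_rw [h1]
    rw [← Complex.exp_sum, Finset.sum_sub_distrib, Complex.exp_sub, Complex.real_smul, Complex.ofReal_exp]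
    push_cast
    field_simp
  have step2 : ∀ u : EuclideanSpace ℝ (Fin n), cexp (∑ i, z i * u i) * (Real.exp (-q (exV u)) : ℝ)
      = ∫ t in Ioi (0:ℝ), Fq q z t u * (Real.exp (-t) : ℝ) := by
    intro u
    rw [← exp_laplace _ (hpos u), ← integral_complex_ofReal, ← integral_const_mul]
    congr 1; ext t
    unfold Fq; push_cast; ring
  have hshift : ∀ t : ℝ, 0 < t → Integrable (fun u => Fq q z t u) := by
    intro t ht
    simp_rw [Fq_scale hq z t ht]
    exact ((Fq_integrable hq z hz).comp_sub_right _).const_mul _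
  rw [step1]
  simp_rw [step2]
  rw [integral_integral_swap]
  · rw [Complex.Gamma_eq_integral hre, Complex.GammaIntegral, ← integral_mul_const]
    refine setIntegral_congr_fun measurableSet_Ioi fun t (ht : 0 < t) => ?_
    simp_rw [Fq_scale hq z t ht]
    rw [integral_mul_const, integral_const_mul, integral_sub_right_eq_self (Fq q z 1)]
    have : 2 + ∑ i, z i - 1 = 1 + ∑ i, z i := by ring
    rw [this]; ring
  · have hmeas : Continuous (fun p : EuclideanSpace ℝ (Fin n) × ℝ => Fq q z p.2 p.1 * (Real.exp (-p.2) : ℝ)) :=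
      (Fq_cont hq z).mul (by fun_prop)
    refine (integrable_prod_iff' hmeas.aestronglyMeasurable).2 ⟨?_, ?_⟩
    · rw [ae_restrict_iff' measurableSet_Ioi]
      exact ae_of_all _ fun t ht => (hshift t ht).mul_const ((Real.exp (-t) : ℝ) : ℂ)
    · have h5 := Real.GammaIntegral_convergent hre
      refine (h5.mul_const (∫ u, ‖Fq q z 1 u‖)).congr ?_
      rw [Filter.EventuallyEq, ae_restrict_iff' measurableSet_Ioi]
      refine ae_of_all _ fun t (ht : 0 < t) => ?_
      simp only
      simp_rw [Fq_scale hq z t ht, norm_mul]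
      rw [integral_mul_const, integral_const_mul, integral_sub_right_eq_self (fun u => ‖Fq q z 1 u‖),
        Complex.norm_cpow_eq_rpow_re_of_pos ht, Complex.norm_of_nonneg (Real.exp_pos _).le]
      have : (2 + ∑ i, z i).re - 1 = (1 + ∑ i, z i).re := by simp; ring
      rw [this]; ring

theorem mellin_ne_iff {n : ℕ} {q : (Fin n → ℝ) → ℝ} (hq : IsCostFun n q) (z : Fin n → ℂ)
    (hz : ∀ i, 0 < (z i).re) :
    mellinT n (fun x => Real.exp (-q x)) z = 0 ↔ ∫ u, Fq q z 1 u = 0 := by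
  rw [mellin_eq hq z hz, mul_eq_zero]
  have hsre : 0 ≤ ∑ i, (z i).re := Finset.sum_nonneg fun i _ => (hz i).le
  have hre : 0 < (2 + ∑ i, z i).re := by
    simp; linarith
  have := Complex.Gamma_ne_zero_of_re_pos hre
  tauto

theorem Piq_eq {n : ℕ} {q : (Fin n → ℝ) → ℝ} (hq : IsCostFun n q) (c : Fin n → ℝ)
    (f : (Fin n → ℝ) → ℝ) (p0 : ℝ) (hp0 : 0 < p0) (w : EuclideanSpace ℝ (Fin n)) :
    Piq n q f p0 (fun i => p0 * Real.exp (-w i)) = p0 * Real.exp (∑ i, c i * w i) *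
      ∫ u, Kq q c (u - w) * (f (exV u) * ∏ i, exV u i ^ (1 - c i)) := by
  unfold Piq
  rw [cov_int, ← integral_const_mul]
  congr 1; ext u
  have h1 : (fun i => p0 * Real.exp (-w i) * exV u i) = fun i => p0 * exV (u - w) i := by
    ext i
    simp only [exV, PiLp.sub_apply]
    rw [mul_assoc, ← Real.exp_add]; ring_nf
  have h2 : q (fun i => p0 * Real.exp (-w i) * exV u i) = p0 * q (exV (u - w)) := by
    rw [h1]; exact hq.2.2.1 p0 hp0 _ (fun i => Real.exp_pos _)
  have h3 : max 0 (p0 - p0 * q (exV (u - w))) = p0 * max 0 (1 - q (exV (u - w))) := by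
    rw [mul_max_of_nonneg _ _ hp0.le]; congr 1 <;> ring
  have h4 : ∏ i, exV u i ^ (1 - c i) = Real.exp (∑ i, (1 - c i) * u i) := by
    rw [Real.exp_sum]
    refine Finset.prod_congr rfl fun i _ => ?_
    rw [exV, ← Real.exp_mul, mul_comm]
  have h5 : Real.exp (∑ i, u i) = Real.exp (∑ i, c i * w i) * Real.exp (∑ i, c i * (u - w) i)
      * Real.exp (∑ i, (1 - c i) * u i) := by
    rw [← Real.exp_add, ← Real.exp_add, ← Finset.sum_add_distrib, ← Finset.sum_add_distrib]
    congr 1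
    refine Finset.sum_congr rfl fun i _ => ?_
    simp only [PiLp.sub_apply]; ring
  rw [h2, h3, h4, h5, Kq, smul_eq_mul]
  ring

theorem Piq_zero_iff {n : ℕ} {q : (Fin n → ℝ) → ℝ} (hq : IsCostFun n q) (c : Fin n → ℝ)
    (f : (Fin n → ℝ) → ℝ) :
    (∀ p0 : ℝ, 0 < p0 → ∀ p ∈ posOrth n, Piq n q f p0 p = 0) ↔
    ∀ w, ∫ u, Kq q c (u - w) * (f (exV u) * ∏ i, exV u i ^ (1 - c i)) = 0 := by
  constructor
  · intro h w
    have h1 := h 1 one_pos (fun i => 1 * Real.exp (-w i)) (fun i => by positivity)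
    rw [Piq_eq hq c f 1 one_pos w] at h1
    exact (mul_eq_zero.1 h1).resolve_left (by positivity)
  · intro h p0 hp0 p hp
    have h1 := Piq_eq hq c f p0 hp0 (WithLp.toLp 2 fun i => Real.log (p0 / p i))
    have h2 : (fun i => p0 * Real.exp (-(WithLp.toLp 2 fun i => Real.log (p0 / p i) : EuclideanSpace ℝ (Fin n)) i)) = p := by
      ext i
      have := hp i
      simp only [Real.exp_neg]
      rw [Real.exp_log (by positivity)]
      field_simp
    rw [h2, h, mul_zero] at h1
    exact h1
theorem easy_dir {n : ℕ} {q : (Fin n → ℝ) → ℝ} (hq : IsCostFun n q)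
    (c : Fin n → ℝ) (hc : ∀ i, 0 < c i)
    (h : ∀ f : (Fin n → ℝ) → ℝ, MemLinfw n (fun i => 1 - c i) f →
        (∀ p0 : ℝ, 0 < p0 → ∀ p ∈ posOrth n, Piq n q f p0 p = 0) →
        ∀ᵐ x ∂(volume.restrict (posOrth n)), f x = 0) (ξ : Fin n → ℝ) :
    mellinT n (fun x => Real.exp (-q x)) (fun i => (c i : ℂ) + I * (ξ i : ℂ)) ≠ 0 := by
  intro h0
  rw [mellin_ne_iff hq _ (by simpa using hc)] at h0
  set f : (Fin n → ℝ) → ℝ := fun x => (∏ i, x i ^ (c i - 1)) * Real.cos (∑ i, ξ i * Real.log (x i)) with hf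
  have hfm : Measurable f := by fun_prop
  have hfw : ∀ x ∈ posOrth n, f x * ∏ i, x i ^ (1 - c i) = Real.cos (∑ i, ξ i * Real.log (x i)) := by
    intro x hx
    simp only [hf]
    have : (∏ i, x i ^ (c i - 1)) * ∏ i, x i ^ (1 - c i) = 1 := by
      rw [← Finset.prod_mul_distrib]
      refine Finset.prod_eq_one fun i _ => ?_
      rw [← Real.rpow_add (hx i)]; simp
    rw [mul_right_comm, this, one_mul]
  have hp : ∀ u : EuclideanSpace ℝ (Fin n), exV u ∈ posOrth n := fun u i => Real.exp_pos _
  have hg : ∀ u : EuclideanSpace ℝ (Fin n), f (exV u) * ∏ i, exV u i ^ (1 - c i) = Real.cos (∑ i, ξ i * u i) := by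
    intro u
    rw [hfw _ (hp u)]
    simp [exV]
  have hz := h f ⟨hfm.aestronglyMeasurable, 1, ?_⟩ ?_
  · have h1 : ∀ᵐ u : EuclideanSpace ℝ (Fin n), Real.cos (∑ i, ξ i * u i) = 0 := by
      filter_upwards [(exV_qmp n).ae hz] with u hu
      rw [← hg, hu, zero_mul]
    have h2 : (fun u : EuclideanSpace ℝ (Fin n) => Real.cos (∑ i, ξ i * u i)) = fun _ => 0 :=
      (Continuous.ae_eq_iff_eq volume (by fun_prop) continuous_const).1 h1
    have h3 := congrFun h2 0
    simp at h3
  · rw [ae_restrict_iff' (posOrth_isOpen n).measurableSet]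
    refine ae_of_all _ fun x hx => ?_
    rw [hfw x hx]; exact Real.abs_cos_le_one _
  · rw [Piq_zero_iff hq c]
    intro w
    simp_rw [hg]
    have h1 : ∀ u, Kq q c (u - w) * Real.cos (∑ i, ξ i * u i) =
        (cexp (I * ∑ i, ξ i * w i) * Fq q (fun i => (c i : ℂ) + I * (ξ i : ℂ)) 1 (u - w)).re := by
      intro u
      have e : cexp (I * ∑ i, ξ i * w i) * Fq q (fun i => (c i : ℂ) + I * (ξ i : ℂ)) 1 (u - w)
          = (Kq q c (u - w) : ℝ) * cexp ((∑ i, ξ i * u i : ℝ) * I) := by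
        unfold Fq Kq
        push_cast
        have e2 : ∑ i, ((c i : ℂ) + I * ξ i) * ((u - w) i : ℝ) + I * ∑ i, (ξ i : ℂ) * w i
           = (∑ i, (c i : ℂ) * ((u - w) i : ℝ)) + (∑ i, (ξ i : ℂ) * u i) * I := by
          rw [Finset.mul_sum, Finset.sum_mul, ← Finset.sum_add_distrib, ← Finset.sum_add_distrib]
          refine Finset.sum_congr rfl fun i _ => ?_
          simp only [PiLp.sub_apply]; push_cast; ring
        have e3 := congrArg cexp e2
        rw [Complex.exp_add, Complex.exp_add] at e3
        linear_combination (max 0 (1 - (q (exV (u - w)))) : ℝ) * e3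
      rw [e, Complex.re_ofReal_mul, Complex.exp_ofReal_mul_I_re]
    simp_rw [h1]
    have h2 : Integrable fun u => cexp (I * ∑ i, ξ i * w i) * Fq q (fun i => (c i : ℂ) + I * (ξ i : ℂ)) 1 (u - w) :=
      ((Fq_integrable hq _ (by simpa using hc)).comp_sub_right w).const_mul _
    have h3 := integral_re h2
    simp only [RCLike.re_eq_complex_re] at h3
    rw [h3, integral_const_mul, integral_sub_right_eq_self (Fq q _ 1), h0]
    simp

open FourierTransform in
theorem hard_dir {n : ℕ} {q : (Fin n → ℝ) → ℝ} (hq : IsCostFun n q)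
    (c : Fin n → ℝ) (hc : ∀ i, 0 < c i)
    (h : ∀ ξ : Fin n → ℝ, mellinT n (fun x => Real.exp (-q x)) (fun i => (c i : ℂ) + I * (ξ i : ℂ)) ≠ 0)
    (f : (Fin n → ℝ) → ℝ) (hf : MemLinfw n (fun i => 1 - c i) f)
    (hP : ∀ p0 : ℝ, 0 < p0 → ∀ p ∈ posOrth n, Piq n q f p0 p = 0) :
    ∀ᵐ x ∂(volume.restrict (posOrth n)), f x = 0 := by
  obtain ⟨hfm, B, hB⟩ := hf
  rw [Piq_zero_iff hq c] at hP
  apply ae_of_ae_exV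
  set g : EuclideanSpace ℝ (Fin n) → ℝ := fun u => f (exV u) * ∏ i, exV u i ^ (1 - c i) with hg
  have hgm : AEStronglyMeasurable g volume := by
    refine (hfm.comp_quasiMeasurePreserving (exV_qmp n)).mul ?_
    exact Measurable.aestronglyMeasurable (by unfold exV; fun_prop)
  have hgB : ∀ᵐ u, |g u| ≤ B := (exV_qmp n).ae hB
  set g1 := hgm.mk g with hg1
  have hg1m : Measurable g1 := hgm.stronglyMeasurable_mk.measurable
  set g2 : EuclideanSpace ℝ (Fin n) → ℝ := {u | |g1 u| ≤ B}.indicator g1 with hg2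
  have hg2m : Measurable g2 := hg1m.indicator (measurableSet_le (by fun_prop) measurable_const)
  have hgg2 : ∀ᵐ u, g u = g2 u := by
    filter_upwards [hgm.ae_eq_mk, hgB] with u hu1 hu2
    rw [hg2, indicator_of_mem]
    · exact hu1
    · show |g1 u| ≤ B
      rw [hg1, ← hu1]; exact hu2
  have hg2B : ∀ u, ‖((g2 u : ℝ) : ℂ)‖ ≤ max B 0 := by
    intro u
    rw [Complex.norm_real, Real.norm_eq_abs, hg2]
    by_cases hu : u ∈ {u | |g1 u| ≤ B}
    · rw [indicator_of_mem hu]; exact le_max_of_le_left hu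
    · rw [indicator_of_notMem hu]; simp
  have hz := wienerC (fun u => ((Kq q c u : ℝ) : ℂ)) (fun u => ((g2 u : ℝ) : ℂ)) ?_
    (Kq_integrable hq c hc).ofReal ?_ (by fun_prop) _ hg2B ?_
  · filter_upwards [hz, hgg2] with u h1 h2
    have h3 : g u = 0 := by rw [h2]; exact_mod_cast h1
    have h4 : ∏ i, exV u i ^ (1 - c i) ≠ 0 :=
      (Finset.prod_pos fun i _ => Real.rpow_pos_of_pos (Real.exp_pos _) _).ne'
    exact (mul_eq_zero.1 h3).resolve_right h4
  · intro k
    simpa using Kq_moments hq c hc k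
  · intro ξ h0
    apply h (fun i => 2 * Real.pi * ξ i)
    rw [mellin_ne_iff hq _ (by simpa using hc), ← h0, Real.fourierInv_eq']
    congr 1; ext u
    unfold Fq Kq
    push_cast
    rw [smul_eq_mul, ← mul_assoc, ← Complex.exp_add]
    congr 2
    rw [PiLp.inner_apply]
    push_cast
    rw [Finset.mul_sum, Finset.sum_mul, ← Finset.sum_add_distrib]
    refine Finset.sum_congr rfl fun i _ => ?_
    simp; ring
  · intro w
    have h1 : ∫ u, Kq q c (u - w) * g2 u = 0 := by
      rw [← hP w]
      refine integral_congr_ae ?_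
      filter_upwards [hgg2] with u hu
      rw [← hu]
    have h2 := congrArg (fun r : ℝ => (r : ℂ)) h1
    rw [← integral_complex_ofReal] at h2
    simpa using h2

/-- Theorem: for a cost function `q` and `c ∈ ℝ^n_+`, the profit operator `Π_q` is
injective on `L^∞_{I-c}(ℝ^n_+)` iff `(M e^{-q})(c + iξ) ≠ 0` for every `ξ ∈ ℝ^n`. -/
theorem piq_injective_Linf_iff_mellin_no_zeros
    (n : ℕ) (hn : 2 ≤ n) (q : (Fin n → ℝ) → ℝ) (hq : IsCostFun n q)
    (c : Fin n → ℝ) (hc : ∀ i, 0 < c i) :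
    (∀ f : (Fin n → ℝ) → ℝ, MemLinfw n (fun i => 1 - c i) f →
        (∀ p0 : ℝ, 0 < p0 → ∀ p ∈ posOrth n, Piq n q f p0 p = 0) →
        ∀ᵐ x ∂(volume.restrict (posOrth n)), f x = 0) ↔
      ∀ ξ : Fin n → ℝ,
        mellinT n (fun x => Real.exp (-q x)) (fun i => (c i : ℂ) + I * (ξ i : ℂ)) ≠ 0 := by
  exact ⟨fun h ξ => easy_dir hq c hc h ξ, fun h f hf hP => hard_dir hq c hc h f hf hP⟩
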